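/- arXiv:2510.13640 — 2 statements merged into one kernel-verified Lean document; each statement's English description precedes it below -/
import Mathlib

section
/- Every function F : P_1(ℝ) → ℝ of class C^1 is Dawson-differentiable at every m ∈ P_1(ℝ) with respect to every x ∈ ℝ, and its Dawson derivative coincides with its canonical derivative: ΔF(m,x) = δF(m,x); in particular ∫_ℝ ΔF(m,x) dm(x) = 0 for every m ∈ P_1(ℝ). -/
open MeasureTheory Filter Topology

noncomputable section

/-- `π` is a coupling of the measures `m` and `μ` on `ℝ`. -/
def IsCoupling (π : Measure (ℝ × ℝ)) (m μ : Measure ℝ) : Prop :=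
  π.map Prod.fst = m ∧ π.map Prod.snd = μ

/-- The Wasserstein distance of order one between two measures on `ℝ`:
the infimum over couplings `π` of `∫ |x - y| dπ(x,y)`. -/
def W1 (m μ : Measure ℝ) : ℝ :=
  sInf {c : ℝ | ∃ π : Measure (ℝ × ℝ), IsCoupling π m μ ∧ c = ∫ p, |p.1 - p.2| ∂π}

/-- Membership in `P₁(ℝ)`: Borel probability measures on `ℝ` with finite first moment. -/
def MemP1 (m : Measure ℝ) : Prop :=
  IsProbabilityMeasure m ∧ Integrable (fun x => |x|) m

/-- Membership in `P([-K,K])`: probability measures supported in `[-K,K]`. -/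
def MemPK (K : ℝ) (m : Measure ℝ) : Prop :=
  IsProbabilityMeasure m ∧ m (Set.Icc (-K) K)ᶜ = 0

/-- The convex combination `(1-t)·m₀ + t·m` of two measures. -/
def lineSeg (m₀ m : Measure ℝ) (t : ℝ) : Measure ℝ :=
  ENNReal.ofReal (1 - t) • m₀ + ENNReal.ofReal t • m

/-- The integral of `f` against the signed difference `m - μ`:
`∫ f d(m - μ) = ∫ f dm - ∫ f dμ`. -/
def dInt (f : ℝ → ℝ) (m μ : Measure ℝ) : ℝ := (∫ x, f x ∂m) - ∫ x, f x ∂μ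

/-- `W₁`-(sequential) compactness of a subset of `P₁(ℝ)`. -/
def W1Compact (𝒦 : Set (Measure ℝ)) : Prop :=
  (∀ m ∈ 𝒦, MemP1 m) ∧
  ∀ u : ℕ → Measure ℝ, (∀ n, u n ∈ 𝒦) →
    ∃ m ∈ 𝒦, ∃ φ : ℕ → ℕ, StrictMono φ ∧
      Tendsto (fun n => W1 (u (φ n)) m) atTop (𝓝 0)

/-- Sublinearity in the real variable, uniformly over `W₁`-compact sets of measures. -/
def SublinearOnCompacts (G : Measure ℝ → ℝ → ℝ) : Prop :=
  ∀ 𝒦 : Set (Measure ℝ), W1Compact 𝒦 →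
    ∃ C > 0, ∀ m ∈ 𝒦, ∀ x : ℝ, |G m x| ≤ C * (1 + |x|)

/-- `W₁`-continuity of a function of the measure variable at a point of `P₁(ℝ)`. -/
def W1ContinuousAt (g : Measure ℝ → ℝ) (m : Measure ℝ) : Prop :=
  ∀ ε > 0, ∃ η > 0, ∀ μ, MemP1 μ → W1 μ m < η → |g μ - g m| < ε

/-- Joint continuity of `G : P₁(ℝ) × ℝ → ℝ`. -/
def JointlyContinuous (G : Measure ℝ → ℝ → ℝ) : Prop :=
  ∀ m x, MemP1 m → ∀ ε > 0, ∃ η > 0, ∀ μ y, MemP1 μ →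
    W1 μ m < η → |y - x| < η → |G μ y - G m x| < ε

/-- Joint continuity of `G : P₁(ℝ) × ℝ × ℝ → ℝ`. -/
def JointlyContinuous2 (G : Measure ℝ → ℝ → ℝ → ℝ) : Prop :=
  ∀ m x y, MemP1 m → ∀ ε > 0, ∃ η > 0, ∀ μ x' y', MemP1 μ →
    W1 μ m < η → |x' - x| < η → |y' - y| < η → |G μ x' y' - G m x y| < ε

/-- `H` is a version of the (linear functional) derivative of `F : P₁(ℝ) → ℝ`. -/
def IsDerivVersion (F : Measure ℝ → ℝ) (H : Measure ℝ → ℝ → ℝ) : Prop :=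
  Measurable (Function.uncurry H) ∧
  SublinearOnCompacts H ∧
  ∀ m m₀, MemP1 m → MemP1 m₀ →
    F m - F m₀ = ∫ t in (0:ℝ)..1, dInt (H (lineSeg m₀ m t)) m m₀

/-- `H` is the canonical derivative of `F : P₁(ℝ) → ℝ`: the version of the derivative
satisfying `∫ H(μ,x) dμ(x) = 0` for every `μ ∈ P₁(ℝ)`. -/
def IsCanonicalDeriv (F : Measure ℝ → ℝ) (H : Measure ℝ → ℝ → ℝ) : Prop :=
  IsDerivVersion F H ∧ ∀ μ, MemP1 μ → ∫ x, H μ x ∂μ = 0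

/-- `G : P₁(ℝ) × ℝ → ℝ` is of class `C^{0,1}`. -/
def IsC01 (G : Measure ℝ → ℝ → ℝ) : Prop :=
  (∀ m, MemP1 m → ContDiff ℝ 1 (G m)) ∧
  (∀ x : ℝ, ∀ m, MemP1 m → W1ContinuousAt (fun μ => G μ x) m) ∧
  SublinearOnCompacts G ∧
  JointlyContinuous (fun m x => deriv (G m) x)

/-- `F : P₁(ℝ) → ℝ` is of class `C¹` with canonical derivative `H`. -/
def IsC1 (F : Measure ℝ → ℝ) (H : Measure ℝ → ℝ → ℝ) : Prop :=
  IsCanonicalDeriv F H ∧ IsC01 H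

/-- Joint continuity on `P([-K,K]) × [-K,K]`. -/
def JointlyContinuousOnK (K : ℝ) (G : Measure ℝ → ℝ → ℝ) : Prop :=
  ∀ m x, MemPK K m → x ∈ Set.Icc (-K) K → ∀ ε > 0, ∃ η > 0,
    ∀ μ y, MemPK K μ → y ∈ Set.Icc (-K) K → W1 μ m < η → |y - x| < η →
      |G μ y - G m x| < ε

/-- Joint continuity on `P([-K,K]) × [-K,K]²`. -/
def JointlyContinuousOnK2 (K : ℝ) (G : Measure ℝ → ℝ → ℝ → ℝ) : Prop :=
  ∀ m x y, MemPK K m → x ∈ Set.Icc (-K) K → y ∈ Set.Icc (-K) K → ∀ ε > 0, ∃ η > 0,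
    ∀ μ x' y', MemPK K μ → x' ∈ Set.Icc (-K) K → y' ∈ Set.Icc (-K) K →
      W1 μ m < η → |x' - x| < η → |y' - y| < η → |G μ x' y' - G m x y| < ε

end

lemma W1_le_of_coupling {π : Measure (ℝ × ℝ)} {m μ : Measure ℝ} (h : IsCoupling π m μ) :
    W1 m μ ≤ ∫ p, |p.1 - p.2| ∂π := by
  refine csInf_le ⟨0, ?_⟩ ⟨π, h, rfl⟩
  rintro c ⟨π', -, rfl⟩
  exact integral_nonneg fun p => abs_nonneg _

lemma W1_nonneg' (m μ : Measure ℝ) : 0 ≤ W1 m μ := by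
  refine Real.sInf_nonneg ?_
  rintro c ⟨π', -, rfl⟩
  exact integral_nonneg fun p => abs_nonneg _

lemma isCoupling_diag (m : Measure ℝ) : IsCoupling (m.map fun y => (y, y)) m m := by
  have hm : Measurable fun y : ℝ => (y, y) := by fun_prop
  constructor
  · rw [Measure.map_map measurable_fst hm]; exact Measure.map_id
  · rw [Measure.map_map measurable_snd hm]; exact Measure.map_id

lemma integral_diag (m : Measure ℝ) :
    ∫ p : ℝ × ℝ, |p.1 - p.2| ∂(m.map fun y => (y, y)) = 0 := by
  have hm : Measurable fun y : ℝ => (y, y) := by fun_prop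
  rw [integral_map hm.aemeasurable (by fun_prop)]
  simp

lemma W1_self' (m : Measure ℝ) : W1 m m = 0 := by
  refine le_antisymm ?_ (W1_nonneg' m m)
  have := W1_le_of_coupling (isCoupling_diag m)
  rwa [integral_diag] at this

lemma w1Compact_singleton {m : Measure ℝ} (hm : MemP1 m) : W1Compact {m} := by
  refine ⟨by rintro _ rfl; exact hm, fun u hu => ⟨m, rfl, id, strictMono_id, ?_⟩⟩
  have : (fun n => W1 (u (id n)) m) = fun _ => 0 := by
    funext n
    rw [hu (id n), W1_self']
  rw [this]
  exact tendsto_const_nhds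

lemma memP1_dirac (x : ℝ) : MemP1 (Measure.dirac x) :=
  ⟨inferInstance, integrable_dirac (by simp)⟩

lemma memP1_lineSeg {m ν : Measure ℝ} (hm : MemP1 m) (hν : MemP1 ν) {s : ℝ} (h0 : 0 ≤ s)
    (h1 : s ≤ 1) : MemP1 (lineSeg m ν s) := by
  have := hm.1
  have := hν.1
  refine ⟨⟨?_⟩, ?_⟩
  · simp only [lineSeg, Measure.add_apply, Measure.smul_apply, measure_univ, smul_eq_mul, mul_one]
    rw [← ENNReal.ofReal_add (by linarith) h0]
    simp
  · exact (hm.2.smul_measure ENNReal.ofReal_ne_top).add_measure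
      (hν.2.smul_measure ENNReal.ofReal_ne_top)

lemma integral_lineSeg {m ν : Measure ℝ} {f : ℝ → ℝ} (hm : Integrable f m)
    (hν : Integrable f ν) {s : ℝ} (h0 : 0 ≤ s) (h1 : s ≤ 1) :
    ∫ y, f y ∂(lineSeg m ν s) = (1 - s) * ∫ y, f y ∂m + s * ∫ y, f y ∂ν := by
  rw [lineSeg, integral_add_measure (hm.smul_measure ENNReal.ofReal_ne_top)
      (hν.smul_measure ENNReal.ofReal_ne_top), integral_smul_measure, integral_smul_measure,
      ENNReal.toReal_ofReal (by linarith), ENNReal.toReal_ofReal h0, smul_eq_mul, smul_eq_mul]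

lemma lineSeg_lineSeg (m ν : Measure ℝ) {t s : ℝ} (ht : 0 ≤ t) (ht1 : t ≤ 1) (hs : 0 ≤ s)
    (hs1 : s ≤ 1) : lineSeg m (lineSeg m ν s) t = lineSeg m ν (t * s) := by
  simp only [lineSeg, smul_add, smul_smul]
  rw [← add_assoc, ← add_smul, ← ENNReal.ofReal_mul ht, ← ENNReal.ofReal_mul ht,
    ← ENNReal.ofReal_add (by linarith) (mul_nonneg ht (by linarith))]
  congr 3
  ring

lemma measurable_lineSeg (m ν : Measure ℝ) : Measurable (lineSeg m ν) := by
  refine Measure.measurable_of_measurable_coe _ fun s _ => ?_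
  simp only [lineSeg, Measure.add_apply, Measure.smul_apply, smul_eq_mul]
  fun_prop

lemma W1_lineSeg_le {m : Measure ℝ} (hm : MemP1 m) (x : ℝ) {s : ℝ} (h0 : 0 ≤ s)
    (h1 : s ≤ 1) : W1 (lineSeg m (Measure.dirac x) s) m ≤ s * ∫ y, |x - y| ∂m := by
  have := hm.1
  have hd : Measurable fun y : ℝ => (y, y) := by fun_prop
  have hx : Measurable fun y : ℝ => (x, y) := by fun_prop
  have hc : IsCoupling (ENNReal.ofReal (1 - s) • (m.map fun y => (y, y)) +
      ENNReal.ofReal s • (m.map fun y => (x, y))) (lineSeg m (Measure.dirac x) s) m := by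
    constructor
    · rw [Measure.map_add _ _ measurable_fst, Measure.map_smul, Measure.map_smul,
        (isCoupling_diag m).1, Measure.map_map measurable_fst hx]
      have : (Prod.fst ∘ fun y : ℝ => (x, y)) = fun _ => x := rfl
      rw [this, Measure.map_const]
      simp [lineSeg]
    · rw [Measure.map_add _ _ measurable_snd, Measure.map_smul, Measure.map_smul,
        (isCoupling_diag m).2, Measure.map_map measurable_snd hx]
      have : (Prod.snd ∘ fun y : ℝ => (x, y)) = id := rfl
      rw [this, Measure.map_id, ← add_smul, ← ENNReal.ofReal_add (by linarith) h0]
      simp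
  refine (W1_le_of_coupling hc).trans (le_of_eq ?_)
  have hid : Integrable (fun y : ℝ => y) m := by
    have := hm.2
    exact (integrable_norm_iff (by fun_prop)).1 this
  have hi1 : Integrable (fun p : ℝ × ℝ => |p.1 - p.2|) (m.map fun y => (y, y)) := by
    rw [integrable_map_measure (by fun_prop) hd.aemeasurable]
    have : ((fun p : ℝ × ℝ => |p.1 - p.2|) ∘ fun y : ℝ => (y, y)) = fun _ => 0 := by
      funext y; simp
    rw [this]
    exact integrable_zero _ _ _
  have hi2 : Integrable (fun p : ℝ × ℝ => |p.1 - p.2|) (m.map fun y => (x, y)) := by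
    rw [integrable_map_measure (by fun_prop) hx.aemeasurable]
    exact ((integrable_const x).sub hid).abs
  rw [integral_add_measure (hi1.smul_measure ENNReal.ofReal_ne_top)
      (hi2.smul_measure ENNReal.ofReal_ne_top), integral_smul_measure, integral_smul_measure,
      integral_diag, integral_map hx.aemeasurable (by fun_prop), ENNReal.toReal_ofReal h0]
  simp

lemma tendsto_lineSeg {G : Measure ℝ → ℝ} {m : Measure ℝ} (hm : MemP1 m)
    (hG : W1ContinuousAt G m) (x : ℝ) :
    Tendsto (fun s => G (lineSeg m (Measure.dirac x) s)) (𝓝[>] 0) (𝓝 (G m)) := by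
  rw [Metric.tendsto_nhds]
  intro e he
  obtain ⟨η, hη, h⟩ := hG e he
  have hlim : Tendsto (fun s : ℝ => s * ∫ y, |x - y| ∂m) (𝓝[>] 0) (𝓝 0) := by
    have : Continuous (fun s : ℝ => s * ∫ y, |x - y| ∂m) := by fun_prop
    have := this.tendsto 0
    rw [zero_mul] at this
    exact this.mono_left nhdsWithin_le_nhds
  filter_upwards [hlim.eventually_lt_const hη, Ioo_mem_nhdsGT (zero_lt_one' ℝ)] with s hs hs'
  rw [Real.dist_eq]
  exact h _ (memP1_lineSeg hm (memP1_dirac x) hs'.1.le hs'.2.le)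
    ((W1_lineSeg_le hm x hs'.1.le hs'.2.le).trans_lt hs)

lemma integrable_of_sublinear {H : Measure ℝ → ℝ → ℝ} (hH : SublinearOnCompacts H)
    {μ : Measure ℝ} (hμ : MemP1 μ) (hc : Continuous (H μ)) {ν : Measure ℝ} (hν : MemP1 ν) :
    Integrable (H μ) ν := by
  have := hν.1
  obtain ⟨C, -, h⟩ := hH _ (w1Compact_singleton hμ)
  exact (((integrable_const (1:ℝ)).add hν.2).const_mul C).mono' hc.aestronglyMeasurable
    (ae_of_all _ fun y => h μ rfl y)

/-- every `C¹` function `F : P₁(ℝ) → ℝ` is Dawson-differentiable at every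
`m ∈ P₁(ℝ)` w.r.t. every `x ∈ ℝ`, with Dawson derivative `ΔF(m,x) = δF(m,x)`; in particular
`∫ ΔF(m,x) dm(x) = 0`. -/
theorem stmt4 (F : Measure ℝ → ℝ) (δF : Measure ℝ → ℝ → ℝ) (hF : IsC1 F δF) :
    ∀ m, MemP1 m → ∀ x : ℝ,
      Tendsto (fun ε => (F (lineSeg m (Measure.dirac x) ε) - F m) / ε)
        (𝓝[>] (0:ℝ)) (𝓝 (δF m x)) ∧
      ∫ y, δF m y ∂m = 0 := by
  intro m hm x
  obtain ⟨⟨⟨hmeas, hsub, hder⟩, hcan⟩, hC1, hcont, -, -⟩ := hF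
  refine ⟨?_, hcan m hm⟩
  set φ : ℝ → ℝ := fun s => δF (lineSeg m (Measure.dirac x) s) x / (1 - s) with hφ
  have hφm : Measurable φ := by
    have h1 : Measurable fun s : ℝ => δF (lineSeg m (Measure.dirac x) s) x :=
      hmeas.comp ((measurable_lineSeg m _).prodMk measurable_const)
    exact h1.div (by fun_prop)
  have hφt : Tendsto φ (𝓝[>] 0) (𝓝 (δF m x)) := by
    have h1 := tendsto_lineSeg hm (hcont x m hm) x
    have h2 : Tendsto (fun s : ℝ => 1 - s) (𝓝[>] 0) (𝓝 1) := by
      have : Continuous (fun s : ℝ => 1 - s) := by fun_prop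
      have := this.tendsto 0
      rw [sub_zero] at this
      exact this.mono_left nhdsWithin_le_nhds
    have h3 := h1.div h2 one_ne_zero
    rw [div_one] at h3
    exact h3
  -- the difference quotient is an average of φ
  have key : ∀ ε ∈ Set.Ioo (0:ℝ) 1,
      (F (lineSeg m (Measure.dirac x) ε) - F m) / ε = ∫ t in (0:ℝ)..1, φ (t * ε) := by
    intro ε hε
    rw [hder _ _ (memP1_lineSeg hm (memP1_dirac x) hε.1.le hε.2.le) hm,
      ← intervalIntegral.integral_div]
    refine intervalIntegral.integral_congr fun t ht => ?_
    rw [Set.uIcc_of_le zero_le_one] at ht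
    have hs0 : 0 ≤ t * ε := mul_nonneg ht.1 hε.1.le
    have hs1 : t * ε < 1 := (mul_le_of_le_one_left hε.1.le ht.2).trans_lt hε.2
    have hP := memP1_lineSeg hm (memP1_dirac x) hs0 hs1.le
    have hi := fun ν hν => integrable_of_sublinear hsub hP (hC1 _ hP).continuous (ν := ν) hν
    have h0 := hcan _ hP
    rw [integral_lineSeg (hi _ hm) (hi _ (memP1_dirac x)) hs0 hs1.le, integral_dirac] at h0
    simp only [dInt]
    rw [lineSeg_lineSeg m _ ht.1 ht.2 hε.1.le hε.2.le,
      integral_lineSeg (hi _ hm) (hi _ (memP1_dirac x)) hε.1.le hε.2.le, integral_dirac, hφ]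
    have hne : 1 - t * ε ≠ 0 := by linarith
    have hne' : ε ≠ 0 := hε.1.ne'
    rw [div_eq_div_iff hne' hne]
    linear_combination (-ε) * h0
  have hev : ∀ᶠ ε in 𝓝[>] (0:ℝ), ∫ t in (0:ℝ)..1, φ (t * ε)
      = (F (lineSeg m (Measure.dirac x) ε) - F m) / ε := by
    filter_upwards [Ioo_mem_nhdsGT (zero_lt_one' ℝ)] with ε hε using (key ε hε).symm
  refine Tendsto.congr' hev ?_
  have hconst : δF m x = ∫ _t in (0:ℝ)..1, δF m x := by simp
  rw [hconst]
  refine intervalIntegral.tendsto_integral_filter_of_dominated_convergence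
    (fun _ => |δF m x| + 1) ?_ ?_ ?_ ?_
  · exact Eventually.of_forall fun ε =>
      (hφm.comp (measurable_id.mul_const ε)).aestronglyMeasurable
  · have h1 : ∀ᶠ s in 𝓝[>] (0:ℝ), |φ s| < |δF m x| + 1 :=
      hφt.abs.eventually_lt_const (by linarith)
    obtain ⟨r, hr, hrs⟩ := mem_nhdsGT_iff_exists_Ioo_subset.1 h1
    filter_upwards [Ioo_mem_nhdsGT hr] with ε hε
    refine ae_of_all _ fun t ht => ?_
    rw [Set.uIoc_of_le zero_le_one] at ht
    exact (hrs (show t * ε ∈ Set.Ioo 0 r from ⟨mul_pos ht.1 hε.1,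
      (mul_le_of_le_one_left hε.1.le ht.2).trans_lt hε.2⟩)).le
  · simp
  · refine ae_of_all _ fun t ht => ?_
    rw [Set.uIoc_of_le zero_le_one] at ht
    refine hφt.comp ?_
    refine tendsto_nhdsWithin_iff.2 ⟨?_, ?_⟩
    · have : Continuous (fun ε : ℝ => t * ε) := by fun_prop
      have := this.tendsto 0
      rw [mul_zero] at this
      exact this.mono_left nhdsWithin_le_nhds
    · filter_upwards [self_mem_nhdsWithin] with ε hε using mul_pos ht.1 hε
end

section
/- Let K, n be positive integers with n ≥ K+1 and let m ∈ P([−K,K]). Set N := nK and define the open intervals I_{n,k} := ((k−1)/n, (k+1)/n) for −N+1 ≤ k ≤ N−1, I_{n,−N} := (−∞, (−N+1)/n) and I_{n,N} := ((N−1)/n, +∞). Let (ψ_{n,k})_{−N ≤ k ≤ N} be any family of C^∞ nonnegative functions ψ_{n,k} : ℝ → ℝ with supp ψ_{n,k} ⊆ I_{n,k} and Σ_{k=−N}^{N} ψ_{n,k}(x) = 1 for all x ∈ ℝ, and define the atomic measure m^{[n]} := Σ_{k=−N}^{N} (∫_ℝ ψ_{n,k}(x) dm(x)) · δ_{k/n}.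 Then W_1(m, m^{[n]}) ≤ 3/n. -/
open MeasureTheory Filter Topology

/-- The interval `I_{n,k}` of the atomic approximation scheme: `((k-1)/n, (k+1)/n)` for
`-N < k < N`, with the extreme intervals extended to `-∞` and `+∞`. -/
def Ink (n : ℕ) (N k : ℤ) : Set ℝ :=
  if k = -N then Set.Iio ((((-N : ℤ) : ℝ) + 1) / n)
  else if k = N then Set.Ioi ((((N : ℤ) : ℝ) - 1) / n)
  else Set.Ioo (((k : ℝ) - 1) / n) (((k : ℝ) + 1) / n)

/-- atomic approximation: for a subordinate smooth partition of unity
`(ψ_{n,k})` and `m ∈ P([-K,K])`, the atomic measure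
`m^{[n]} = Σ_k (∫ ψ_{n,k} dm) δ_{k/n}` satisfies `W₁(m, m^{[n]}) ≤ 3/n`. -/
theorem stmt6 (K n : ℕ) (hK : 0 < K) (hn : K + 1 ≤ n)
    (m : Measure ℝ) (hm : MemPK (K : ℝ) m)
    (N : ℤ) (hN : N = (n : ℤ) * K)
    (ψ : ℤ → ℝ → ℝ)
    (hψsmooth : ∀ k ∈ Finset.Icc (-N) N, ContDiff ℝ (⊤ : ℕ∞) (ψ k))
    (hψpos : ∀ k ∈ Finset.Icc (-N) N, ∀ x, 0 ≤ ψ k x)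
    (hψsupp : ∀ k ∈ Finset.Icc (-N) N, Function.support (ψ k) ⊆ Ink n N k)
    (hψsum : ∀ x : ℝ, ∑ k ∈ Finset.Icc (-N) N, ψ k x = 1) :
    W1 m (∑ k ∈ Finset.Icc (-N) N,
        ENNReal.ofReal (∫ x, ψ k x ∂m) • Measure.dirac ((k : ℝ) / n)) ≤ 3 / n := by
  obtain ⟨hprob, hsupp⟩ := hm
  have hn0 : (0 : ℝ) < n := by
    have : 0 < n := by omega
    exact_mod_cast this
  have hmeas : ∀ k ∈ Finset.Icc (-N) N, Measurable (ψ k) := fun k hk =>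
    (hψsmooth k hk).continuous.measurable
  have hle1 : ∀ k ∈ Finset.Icc (-N) N, ∀ x, ψ k x ≤ 1 := by
    intro k hk x
    rw [← hψsum x]
    exact Finset.single_le_sum (f := fun k => ψ k x) (fun i hi => hψpos i hi x) hk
  have hint : ∀ k ∈ Finset.Icc (-N) N, Integrable (ψ k) m := by
    intro k hk
    refine Integrable.of_bound (hmeas k hk).aestronglyMeasurable 1 (ae_of_all _ fun x => ?_)
    rw [Real.norm_of_nonneg (hψpos k hk x)]
    exact hle1 k hk x
  have hae : ∀ᵐ x ∂m, x ∈ Set.Icc (-(K : ℝ)) K := by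
    rw [ae_iff]; exact hsupp
  have hf : ∀ k : ℤ, Measurable (fun x : ℝ => (x, (k : ℝ) / n)) := fun k => by fun_prop
  let ρ : ℤ → Measure (ℝ × ℝ) := fun k =>
    (m.withDensity (fun x => ENNReal.ofReal (ψ k x))).map (fun x : ℝ => (x, (k : ℝ) / n))
  let π : Measure (ℝ × ℝ) := ∑ k ∈ Finset.Icc (-N) N, ρ k
  have hmapsum : ∀ g : ℝ × ℝ → ℝ, Measurable g →
      π.map g = ∑ k ∈ Finset.Icc (-N) N, (ρ k).map g := by
    intro g hg
    ext s hs
    simp [π, Measure.map_apply hg hs]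
  have h1 : π.map Prod.fst = m := by
    rw [hmapsum _ measurable_fst]
    have : ∀ k, (ρ k).map Prod.fst = m.withDensity (fun x => ENNReal.ofReal (ψ k x)) := by
      intro k
      simp only [ρ]
      rw [Measure.map_map measurable_fst (hf k)]
      exact Measure.map_id
    simp only [this]
    ext s hs
    rw [Measure.finsetSum_apply]
    simp only [withDensity_apply _ hs]
    rw [← lintegral_finsetSum' _ (fun k hk => (hmeas k hk).ennreal_ofReal.aemeasurable)]
    have : ∀ x, ∑ k ∈ Finset.Icc (-N) N, ENNReal.ofReal (ψ k x) = 1 := by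
      intro x
      rw [← ENNReal.ofReal_sum_of_nonneg (fun i hi => hψpos i hi x), hψsum]
      simp
    simp [this]
  have h2 : π.map Prod.snd = ∑ k ∈ Finset.Icc (-N) N,
        ENNReal.ofReal (∫ x, ψ k x ∂m) • Measure.dirac ((k : ℝ) / n) := by
    rw [hmapsum _ measurable_snd]
    refine Finset.sum_congr rfl fun k hk => ?_
    simp only [ρ]
    rw [Measure.map_map measurable_snd (hf k)]
    change Measure.map (fun _ => (k : ℝ) / n) _ = _
    rw [Measure.map_const, withDensity_apply _ MeasurableSet.univ, Measure.restrict_univ,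
      ofReal_integral_eq_lintegral_ofReal (hint k hk) (ae_of_all _ (hψpos k hk))]
  have hπuniv : π Set.univ = 1 := by
    have := measure_univ (μ := m)
    rw [← h1, Measure.map_apply measurable_fst MeasurableSet.univ] at this
    simpa using this
  have hπprob : IsProbabilityMeasure π := ⟨hπuniv⟩
  have hset : MeasurableSet {p : ℝ × ℝ | ‖|p.1 - p.2|‖ ≤ 1 / n} :=
    measurableSet_le (by fun_prop) (by fun_prop)
  have hπae : ∀ᵐ p ∂π, ‖|p.1 - p.2|‖ ≤ 1 / (n : ℝ) := by
    rw [ae_iff]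
    simp only [π]
    rw [Measure.finsetSum_apply]
    refine Finset.sum_eq_zero fun k hk => ?_
    rw [← ae_iff]
    simp only [ρ]
    rw [ae_map_iff (hf k).aemeasurable hset,
      ae_withDensity_iff (hmeas k hk).ennreal_ofReal]
    filter_upwards [hae] with x hx hne
    have hx' : x ∈ Ink n N k := by
      apply hψsupp k hk
      intro h0
      simp [h0] at hne
    have hNK : (N : ℝ) = n * K := by rw [hN]; push_cast; ring
    obtain ⟨hxl, hxu⟩ := hx
    rw [Real.norm_of_nonneg (abs_nonneg _)]
    have key : |x * n - k| ≤ 1 := by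
      rw [abs_le]
      unfold Ink at hx'
      split_ifs at hx' with ha hb
      · rw [Set.mem_Iio, lt_div_iff₀ hn0] at hx'
        subst ha
        push_cast at hx' ⊢
        constructor <;> nlinarith
      · rw [Set.mem_Ioi, div_lt_iff₀ hn0] at hx'
        subst hb
        constructor <;> nlinarith
      · rw [Set.mem_Ioo, lt_div_iff₀ hn0, div_lt_iff₀ hn0] at hx'
        constructor <;> linarith [hx'.1, hx'.2]
    have : x - k / n = (x * n - k) / n := by field_simp
    change |x - k / n| ≤ 1 / (n : ℝ)
    rw [this, abs_div, abs_of_pos hn0]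
    gcongr
  have hbound : ∫ p, |p.1 - p.2| ∂π ≤ 1 / n := by
    have := norm_integral_le_of_norm_le_const hπae
    simp only [probReal_univ, mul_one] at this
    exact (le_abs_self _).trans this
  have hW : W1 m (∑ k ∈ Finset.Icc (-N) N,
        ENNReal.ofReal (∫ x, ψ k x ∂m) • Measure.dirac ((k : ℝ) / n))
        ≤ ∫ p, |p.1 - p.2| ∂π := by
    refine csInf_le ⟨0, ?_⟩ ⟨π, ⟨h1, h2⟩, rfl⟩
    rintro c ⟨π', -, rfl⟩
    exact integral_nonneg fun p => abs_nonneg _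
  refine hW.trans (hbound.trans ?_)
  gcongr
  norm_num
end
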